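/- arXiv:2403.04163 — 2 statements merged into one kernel-verified Lean document; each statement's English description precedes it below -/
import Mathlib

section
/- In a Floquet code with measurement sequence M = {m_1,…,m_l} repeated cyclically, starting from the trivial stabilizer group, the instantaneous stabilizer group after measuring m_i in cycle j is a subgroup of the instantaneous stabilizer group after measuring m_i in cycle j+1: ⟨S_j^{(i)}⟩ ⊆ ⟨S_{j+1}^{(i)}⟩ for all i ≤ l and all cycles j ≥ 1. -/
abbrev PauliVec (n : ℕ) := (Fin n → ZMod 2) × (Fin n → ZMod 2)

def sympl {n : ℕ} (v w : PauliVec n) : ZMod 2 :=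
  ∑ i, (v.1 i * w.2 i + v.2 i * w.1 i)

/-- The symplectic product with a fixed `m`, as a linear map. -/
def symplMap {n : ℕ} (m : PauliVec n) : PauliVec n →ₗ[ZMod 2] ZMod 2 where
  toFun v := sympl v m
  map_add' v w := by
    simp only [sympl, Prod.fst_add, Prod.snd_add, Pi.add_apply]
    rw [← Finset.sum_add_distrib]
    exact Finset.sum_congr rfl fun i _ => by ring
  map_smul' c v := by
    simp only [sympl, Prod.smul_fst, Prod.smul_snd, Pi.smul_apply, smul_eq_mul,
      RingHom.id_apply, Finset.mul_sum]
    exact Finset.sum_congr rfl fun i _ => by ring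

/-- The symplectic complement of a single Pauli `m` (operators commuting with it). -/
def perp {n : ℕ} (m : PauliVec n) : Submodule (ZMod 2) (PauliVec n) :=
  LinearMap.ker (symplMap m)

open Submodule in
/-- Update of an instantaneous stabilizer group under measurement of the Pauli `m`:
the commuting part of `S` survives and `m` is adjoined.  This simultaneously
covers all three stabilizer update rules. -/
def measUpdate {n : ℕ} (S : Submodule (ZMod 2) (PauliVec n)) (m : PauliVec n) :
    Submodule (ZMod 2) (PauliVec n) :=
  (S ⊓ perp m) ⊔ span (ZMod 2) {m}

/-- Run a sequence of measurements starting from the stabilizer group `S`. -/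
def runSeq {n : ℕ} (ms : List (PauliVec n)) (S : Submodule (ZMod 2) (PauliVec n)) :
    Submodule (ZMod 2) (PauliVec n) :=
  ms.foldl measUpdate S

/-- The instantaneous stabilizer group after `j` complete cycles of the periodic
measurement sequence `M`, starting from the trivial stabilizer group. -/
def cycISG {n : ℕ} (M : List (PauliVec n)) (j : ℕ) :
    Submodule (ZMod 2) (PauliVec n) :=
  runSeq ((List.replicate j M).flatten) ⊥

theorem runSeq_mono {n : ℕ} (ms : List (PauliVec n)) :
    ∀ {S T : Submodule (ZMod 2) (PauliVec n)}, S ≤ T → runSeq ms S ≤ runSeq ms T := by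
  induction ms with
  | nil => intro S T h; exact h
  | cons m ms ih =>
    intro S T h
    exact ih (S := measUpdate S m) (T := measUpdate T m)
      (sup_le_sup_right (inf_le_inf_right _ h) _)

/-- Floquet monotonicity: in a Floquet code with cycle `M`, the ISG
after measuring `m_i` in cycle `j` is contained in the ISG after measuring `m_i`
in cycle `j+1`:  `⟨S_j^{(i)}⟩ ⊆ ⟨S_{j+1}^{(i)}⟩` for all `i ≤ l`, `j ≥ 1`. -/
theorem floquet_isg_monotone {n : ℕ} (M : List (PauliVec n)) (i j : ℕ)
    (hi : i ≤ M.length) (hj : 1 ≤ j) :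
    runSeq (M.take i) (cycISG M (j - 1)) ≤ runSeq (M.take i) (cycISG M j) := by
  obtain ⟨k, rfl⟩ : ∃ k, j = k + 1 := ⟨j - 1, by omega⟩
  apply runSeq_mono
  have h : cycISG M (k + 1) = runSeq ((List.replicate k M).flatten) (runSeq M ⊥) := by
    simp [cycISG, runSeq, List.replicate_succ, List.foldl_append]
  rw [h, Nat.add_sub_cancel]
  exact runSeq_mono _ bot_le
end

section
/- There exists, for every n ≥ 3, a periodic measurement sequence (Floquet code) on some number of qubits whose fully initialized stabilizer group has n independent generators and which requires exactly n−1 cycles to fully initialize: each cycle after the first increases the number of independent stabilizer generators by exactly one. -/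
theorem fl_mem_perp {n : ℕ} (m v : PauliVec n) : v ∈ perp m ↔ sympl v m = 0 := Iff.rfl

theorem fl_add_left {n : ℕ} (u v m : PauliVec n) : sympl (u + v) m = sympl u m + sympl v m :=
  (symplMap m).map_add u v

theorem fl_smul_left {n : ℕ} (c : ZMod 2) (v m : PauliVec n) :
    sympl (c • v) m = c * sympl v m :=
  (symplMap m).map_smul c v

theorem fl_comm {n : ℕ} (u v : PauliVec n) : sympl u v = sympl v u := by
  unfold sympl
  exact Finset.sum_congr rfl fun i _ => by ring

theorem fl_add_right {n : ℕ} (u v m : PauliVec n) : sympl m (u + v) = sympl m u + sympl m v := by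
  rw [fl_comm, fl_add_left, fl_comm u, fl_comm v]

theorem fl_two {n : ℕ} (v : PauliVec n) : v + v = 0 := by
  ext i <;> simp [CharTwo.add_self_eq_zero]

/-- Correct `s` by `a` so that it commutes with `m`. -/
def flProj {n : ℕ} (a m : PauliVec n) : PauliVec n →ₗ[ZMod 2] PauliVec n :=
  LinearMap.id + (symplMap m).smulRight a

theorem flProj_apply {n : ℕ} (a m s : PauliVec n) : flProj a m s = s + sympl s m • a := rfl

theorem fl_meas {n : ℕ} (A : Submodule (ZMod 2) (PauliVec n)) (a m : PauliVec n)
    (h : sympl a m = 1) :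
    measUpdate (A ⊔ Submodule.span (ZMod 2) {a}) m =
      A.map (flProj a m) ⊔ Submodule.span (ZMod 2) {m} := by
  unfold measUpdate
  congr 1
  ext v
  simp only [Submodule.mem_inf, Submodule.mem_map, fl_mem_perp]
  constructor
  · rintro ⟨hv, hm⟩
    obtain ⟨y, hy, w, hw, rfl⟩ := Submodule.mem_sup.1 hv
    obtain ⟨c, rfl⟩ := Submodule.mem_span_singleton.1 hw
    refine ⟨y, hy, ?_⟩
    rw [fl_add_left, fl_smul_left, h, mul_one] at hm
    rw [flProj_apply]
    have : sympl y m = c := CharTwo.add_eq_zero.1 hm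
    rw [this]
  · rintro ⟨y, hy, rfl⟩
    rw [flProj_apply]
    refine ⟨Submodule.add_mem_sup hy (Submodule.smul_mem _ _ (Submodule.mem_span_singleton_self a)), ?_⟩
    rw [fl_add_left, fl_smul_left, h, mul_one]
    exact CharTwo.add_self_eq_zero _

theorem fl_runSeq_append {n : ℕ} (l₁ l₂ : List (PauliVec n)) (S : Submodule (ZMod 2) (PauliVec n)) :
    runSeq (l₁ ++ l₂) S = runSeq l₂ (runSeq l₁ S) := by
  simp [runSeq]

/-- Measurement loop implementing the transvection by `R`. -/
theorem fl_loop {n : ℕ} (a b R : PauliVec n) (G : Set (PauliVec n))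
    (hab : sympl a b = 1) (haa : sympl a a = 0) (hbb : sympl b b = 0)
    (haR : sympl a R = 0) (hbR : sympl b R = 0)
    (hGa : ∀ s ∈ G, sympl s a = 0) (hGb : ∀ s ∈ G, sympl s b = 0) :
    runSeq [b + R, a + b, a] (Submodule.span (ZMod 2) G ⊔ Submodule.span (ZMod 2) {a}) =
      Submodule.span (ZMod 2) ((fun s => s + sympl s R • R) '' G) ⊔
        Submodule.span (ZMod 2) {a} := by
  have hba : sympl b a = 1 := by rw [fl_comm, hab]
  have hRa : sympl R a = 0 := by rw [fl_comm, haR]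
  have hRb : sympl R b = 0 := by rw [fl_comm, hbR]
  simp only [runSeq, List.foldl]
  rw [fl_meas _ a (b + R) (by rw [fl_add_right, hab, haR, add_zero]),
    fl_meas _ (b + R) (a + b) (by simp [fl_add_right, fl_add_left, hba, hbb, hRa, hRb]),
    fl_meas _ (a + b) a (by simp [fl_add_left, hba, haa])]
  simp only [Submodule.map_span, Set.image_image]
  congr 2
  apply Set.image_congr
  intro s hs
  have h1 := hGa s hs
  have h2 := hGb s hs
  simp only [flProj_apply, fl_add_right, fl_add_left, fl_smul_left, h1, h2, hab, haa, hbb, haR, hbR,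
    hba, hRa, hRb]
  generalize sympl s R = c
  have hA := fl_two a
  have hB := fl_two b
  have : ∀ c : ZMod 2, c = 0 ∨ c = 1 := by decide
  rcases this c with rfl | rfl
  · simp
  · simp only [zero_add, mul_one, add_zero, one_smul, mul_zero]
    calc s + a + (b + R) + (a + b) = s + R + (a + a) + (b + b) := by abel
      _ = s + R := by rw [hA, hB]; simp

def flZ {q : ℕ} (i : Fin q) : PauliVec q := (0, Pi.single i 1)
def flX {q : ℕ} (i : Fin q) : PauliVec q := (Pi.single i 1, 0)

theorem fl_zz {q : ℕ} (i j : Fin q) : sympl (flZ i) (flZ j) = 0 := by simp [sympl, flZ]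
theorem fl_xx {q : ℕ} (i j : Fin q) : sympl (flX i) (flX j) = 0 := by simp [sympl, flX]
theorem fl_zx {q : ℕ} (i j : Fin q) : sympl (flZ i) (flX j) = if i = j then 1 else 0 := by
  simp [sympl, flZ, flX, Pi.single_apply]
  exact if_congr eq_comm rfl rfl
theorem fl_xz {q : ℕ} (i j : Fin q) : sympl (flX i) (flZ j) = if i = j then 1 else 0 := by
  rw [fl_comm, fl_zx]; exact if_congr eq_comm rfl rfl

/-- The group generated by `Z_0` and `Z_{i+1}`, `i ∈ I`. -/
def flS {n : ℕ} (I : Set (Fin n)) : Submodule (ZMod 2) (PauliVec (n + 1)) :=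
  Submodule.span (ZMod 2) ((fun i : Fin n => flZ i.succ) '' I) ⊔ Submodule.span (ZMod 2) {flZ 0}

theorem fl_swap {n : ℕ} (i k : Fin n) (hik : i ≠ k) :
    ∃ L : List (PauliVec (n + 1)), ∀ I : Set (Fin n),
      runSeq L (flS I) = flS (Equiv.swap i k '' I) := by
  have h0 : ∀ j : Fin n, (0 : Fin (n + 1)) ≠ j.succ := fun j => (Fin.succ_ne_zero j).symm
  have h0' : ∀ j : Fin n, j.succ ≠ (0 : Fin (n + 1)) := fun j => (Fin.succ_ne_zero j)
  refine ⟨[flX 0 + (flX i.succ + flX k.succ), flZ 0 + flX 0, flZ 0] ++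
    [flX 0 + (flX i.succ + flX k.succ + flZ i.succ + flZ k.succ), flZ 0 + flX 0, flZ 0], ?_⟩
  intro I
  rw [fl_runSeq_append, flS, fl_loop, fl_loop, flS]
  · simp only [Set.image_image]
    congr 2
    apply Set.image_congr
    intro s hs
    have hA := fl_two (flX i.succ : PauliVec (n + 1))
    have hB := fl_two (flX k.succ : PauliVec (n + 1))
    have hC := fl_two (flZ i.succ : PauliVec (n + 1))
    have hD := fl_two (flZ k.succ : PauliVec (n + 1))
    have hki := hik.symm
    by_cases h1 : s = i
    · subst h1
      simp only [fl_add_left, fl_add_right, fl_smul_left, fl_zz, fl_xx, fl_zx, fl_xz,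
        Equiv.swap_apply_left, Fin.succ_inj, hik, hki, if_true, if_false]
      simp only [zero_add, mul_one, mul_zero, add_zero, one_smul, CharTwo.add_self_eq_zero]
      calc _ = flZ k.succ + (flZ s.succ + flZ s.succ) + (flX s.succ + flX s.succ)
            + (flX k.succ + flX k.succ) := by abel
        _ = _ := by rw [hA, hB, hC]; simp
    · by_cases h2 : s = k
      · subst h2
        simp only [fl_add_left, fl_add_right, fl_smul_left, fl_zz, fl_xx, fl_zx, fl_xz,
          Equiv.swap_apply_right, Fin.succ_inj, hik, hki, if_true, if_false]
        simp only [zero_add, mul_one, mul_zero, add_zero, one_smul, CharTwo.add_self_eq_zero]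
        calc _ = flZ i.succ + (flZ s.succ + flZ s.succ) + (flX s.succ + flX s.succ)
              + (flX i.succ + flX i.succ) := by abel
          _ = _ := by rw [hA, hB, hD]; simp
      · rw [Equiv.swap_apply_of_ne_of_ne h1 h2]
        simp [fl_add_right, fl_zz, fl_zx, h1, h2]
  all_goals first
    | (rintro _ ⟨_, ⟨s, _, rfl⟩, rfl⟩
       simp [fl_add_left, fl_smul_left, fl_zz, fl_xx, fl_zx, fl_xz, h0, h0'])
    | (rintro _ ⟨s, _, rfl⟩
       simp [fl_zz, fl_zx, h0, h0'])
    | simp [fl_add_right, fl_zz, fl_xx, fl_zx, fl_xz, h0, h0']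

theorem fl_perm {n : ℕ} (σ : Equiv.Perm (Fin n)) :
    ∃ L : List (PauliVec (n + 1)), ∀ I : Set (Fin n), runSeq L (flS I) = flS (σ '' I) := by
  induction σ using Equiv.Perm.swap_induction_on with
  | one => exact ⟨[], fun I => by simp [runSeq]⟩
  | swap_mul f x y hxy ih =>
    obtain ⟨L, hL⟩ := ih
    obtain ⟨L', hL'⟩ := fl_swap x y hxy
    refine ⟨L ++ L', fun I => ?_⟩
    rw [fl_runSeq_append, hL, hL', Set.image_image]
    rfl

theorem fl_le_perp {n : ℕ} (I : Set (Fin n)) (p : Fin (n + 1)) : flS I ≤ perp (flZ p) := by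
  refine sup_le (Submodule.span_le.2 ?_) (Submodule.span_le.2 ?_)
  · rintro _ ⟨s, _, rfl⟩
    exact fl_zz _ _
  · rintro _ rfl
    exact fl_zz _ _

theorem fl_meas_zero {n : ℕ} (I : Set (Fin n)) : measUpdate (flS I) (flZ 0) = flS I := by
  rw [measUpdate, inf_eq_left.2 (fl_le_perp I 0), sup_eq_left]
  exact le_sup_right

theorem fl_meas_bot {n : ℕ} :
    measUpdate ⊥ (flZ 0) = flS (∅ : Set (Fin n)) := by
  simp [measUpdate, flS]

theorem fl_meas_succ {n : ℕ} (I : Set (Fin n)) (p : Fin n) :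
    measUpdate (flS I) (flZ p.succ) = flS (insert p I) := by
  rw [measUpdate, inf_eq_left.2 (fl_le_perp I _), flS, flS, Set.image_insert_eq,
    Submodule.span_insert]
  ac_rfl

theorem fl_indep {q : ℕ} : LinearIndependent (ZMod 2) (fun i : Fin q => flZ i) := by
  have h := (Pi.basisFun (ZMod 2) (Fin q)).linearIndependent.map'
    (LinearMap.inr (ZMod 2) (Fin q → ZMod 2) (Fin q → ZMod 2))
    (LinearMap.ker_eq_bot.2 LinearMap.inr_injective)
  have e : (fun i : Fin q => (flZ i : PauliVec q)) =
      LinearMap.inr (ZMod 2) (Fin q → ZMod 2) (Fin q → ZMod 2) ∘ Pi.basisFun (ZMod 2) (Fin q) := by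
    funext i
    simp [flZ]
  rw [e]
  exact h

theorem fl_finrank {n : ℕ} (I : Finset (Fin n)) :
    Module.finrank (ZMod 2) (flS (I : Set (Fin n))) = I.card + 1 := by
  classical
  have e : flS (I : Set (Fin n)) = Submodule.span (ZMod 2)
      ((insert 0 (I.map (Fin.succEmb n)) : Finset (Fin (n + 1))).image
        (fun i => (flZ i : PauliVec (n + 1))) : Set (PauliVec (n + 1))) := by
    rw [flS, Finset.coe_image, Finset.coe_insert, Set.image_insert_eq, Submodule.span_insert,
      sup_comm, Finset.coe_map, Set.image_image]
    rfl
  have hli : LinearIndepOn (ZMod 2) id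
      ((insert 0 (I.map (Fin.succEmb n)) : Finset (Fin (n + 1))).image
        (fun i => (flZ i : PauliVec (n + 1))) : Set (PauliVec (n + 1))) := by
    rw [Finset.coe_image]
    exact (fl_indep.linearIndepOn _).id_image
  rw [e, finrank_span_finset_eq_card hli, Finset.card_image_of_injective _ fl_indep.injective,
    Finset.card_insert_of_notMem, Finset.card_map]
  simp [Fin.succ_ne_zero]

def flI (n j : ℕ) : Finset (Fin n) := Finset.univ.filter (fun i => i.val < j)

theorem flI_card (n j : ℕ) (h : j ≤ n) : (flI n j).card = j := by
  rw [flI, Fin.card_filter_val_lt, min_eq_right h]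

theorem flI_step (n j : ℕ) :
    insert (0 : Fin (n + 1)) (finRotate (n + 1) '' (flI (n + 1) j : Set (Fin (n + 1)))) =
      (flI (n + 1) (j + 1) : Set (Fin (n + 1))) := by
  ext i
  simp only [flI, Set.mem_insert_iff, Set.mem_image, Finset.coe_filter, Finset.mem_univ, true_and,
    Set.mem_ofPred_eq]
  constructor
  · rintro (rfl | ⟨k, hk, rfl⟩)
    · simp
    · by_cases h : k = Fin.last n
      · subst h; simp
      · rw [coe_finRotate_of_ne_last h]; omega
  · intro hi
    by_cases h : i = 0
    · exact Or.inl h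
    · right
      have hpos : 0 < i.val := Nat.pos_of_ne_zero fun h' => h (Fin.ext h')
      refine ⟨⟨i.val - 1, by omega⟩, by simp; omega, ?_⟩
      apply Fin.ext
      rw [coe_finRotate_of_ne_last]
      · simp; omega
      · intro h'
        have := congrArg Fin.val h'
        simp at this
        omega

theorem fl_cyc_succ {q : ℕ} (M : List (PauliVec q)) (j : ℕ) :
    cycISG M (j + 1) = runSeq M (cycISG M j) := by
  rw [cycISG, List.replicate_succ', List.flatten_append, fl_runSeq_append, cycISG]
  simp

theorem fl_exists (n : ℕ) : ∃ M : List (PauliVec (n + 1 + 1)),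
    ∀ j, cycISG M (j + 1) = flS (flI (n + 1) (j + 1) : Set (Fin (n + 1))) := by
  obtain ⟨L, hL⟩ := fl_perm (finRotate (n + 1))
  have key : ∀ j S, measUpdate S (flZ 0) = flS (flI (n + 1) j : Set (Fin (n + 1))) →
      runSeq ([flZ 0] ++ L ++ [flZ (Fin.succ 0)]) S =
        flS (flI (n + 1) (j + 1) : Set (Fin (n + 1))) := by
    intro j S hS
    rw [fl_runSeq_append, fl_runSeq_append]
    have h1 : runSeq [flZ 0] S = flS (flI (n + 1) j : Set (Fin (n + 1))) := hS
    rw [h1, hL]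
    change measUpdate _ _ = _
    rw [fl_meas_succ, flI_step]
  refine ⟨[flZ 0] ++ L ++ [flZ (Fin.succ 0)], fun j => ?_⟩
  induction j with
  | zero =>
    rw [fl_cyc_succ]
    apply key
    have : (flI (n + 1) 0 : Set (Fin (n + 1))) = ∅ := by simp [flI]
    rw [this]
    exact fl_meas_bot
  | succ j ih =>
    rw [fl_cyc_succ, ih]
    exact key _ _ (fl_meas_zero _)

/-- for every `N ≥ 3` there is a Floquet code (a periodic
measurement sequence on some number of qubits) whose fully initialized
stabilizer group has `N` independent generators and which takes exactly `N - 1`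
cycles to initialize: each cycle after the first adds exactly one new
independent stabilizer generator, the code is fully initialized after `N - 1`
cycles, and not earlier. -/
theorem floquet_slow_initialization (N : ℕ) (hN : 3 ≤ N) :
    ∃ (q : ℕ) (M : List (PauliVec q)),
      Module.finrank (ZMod 2) ↥(⨆ j, cycISG M j) = N ∧
      (∀ j, 1 ≤ j → j ≤ N - 2 →
        Module.finrank (ZMod 2) ↥(cycISG M (j + 1)) =
          Module.finrank (ZMod 2) ↥(cycISG M j) + 1) ∧
      cycISG M (N - 1) = ⨆ j, cycISG M j ∧
      cycISG M (N - 2) ≠ ⨆ j, cycISG M j := by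
  obtain ⟨n, rfl⟩ : ∃ n, N = n + 3 := ⟨N - 3, by omega⟩
  obtain ⟨M, hM⟩ := fl_exists (n + 1)
  have e1 : n + 3 - 1 = n + 1 + 1 := rfl
  have e2 : n + 3 - 2 = n + 1 := rfl
  have hrank : ∀ j, 1 ≤ j → j ≤ n + 2 → Module.finrank (ZMod 2) ↥(cycISG M j) = j + 1 := by
    intro j h1 h2
    obtain ⟨k, rfl⟩ : ∃ k, j = k + 1 := ⟨j - 1, by omega⟩
    rw [hM, fl_finrank, flI_card _ _ h2]
  have hsup : cycISG M (n + 2) = ⨆ j, cycISG M j := by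
    apply le_antisymm (le_iSup (cycISG M) (n + 2))
    apply iSup_le
    intro j
    cases j with
    | zero => simp [cycISG, runSeq]
    | succ j =>
      rw [hM, hM]
      refine sup_le_sup_right (Submodule.span_mono (Set.image_mono ?_)) _
      intro i _
      simp only [flI, Finset.coe_filter, Finset.mem_univ, true_and, Set.mem_ofPred_eq]
      exact i.isLt
  refine ⟨n + 1 + 1 + 1, M, ?_, ?_, hsup, ?_⟩
  · rw [← hsup, hrank _ (by omega) le_rfl]
  · intro j h1 h2
    rw [hrank j h1 (by omega), hrank (j + 1) (by omega) (by omega)]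
  · rw [e2, ← hsup]
    intro h
    have h1 := hrank (n + 1) (by omega) (by omega)
    have h2 := hrank (n + 2) (by omega) (by omega)
    rw [h] at h1
    omega
end
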